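/- arXiv:1502.04429 — 2 statements merged into one kernel-verified Lean document; each statement's English description precedes it below -/
import Mathlib

section
/- Let G be the group of all increasing bijections from ℚ to itself, with composition as the group operation and with the topology of pointwise convergence (induced from the product topology on ℚ^ℚ with ℚ discrete). Then G is extremely amenable: every continuous action of G on a nonempty compact Hausdorff space has a fixed point. -/
/-- A topological group `G` is *extremely amenable* if every continuous action of `G` on a
nonempty compact Hausdorff space has a fixed point. -/
def ExtremelyAmenable (G : Type) [Group G] [TopologicalSpace G] : Prop :=
  ∀ (K : Type) [TopologicalSpace K] [CompactSpace K] [T2Space K] [Nonempty K]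
    [MulAction G K] [ContinuousSMul G K], ∃ x : K, ∀ g : G, g • x = x

/-- The group of increasing bijections of `ℚ` (i.e. order isomorphisms `ℚ ≃o ℚ`),
with composition as the group operation. -/
instance : Group (ℚ ≃o ℚ) where
  mul f g := g.trans f
  one := OrderIso.refl ℚ
  inv := OrderIso.symm
  mul_assoc _ _ _ := rfl
  one_mul _ := rfl
  mul_one _ := rfl
  inv_mul_cancel f := by
    ext x
    exact f.symm_apply_apply x

/-!
Let `u` be a nonprincipal ultrafilter on `ℚ`. Iterating `u` gives an ultrafilter on the `n`-element
subsets of `ℚ`, and Ramsey's theorem amounts to the fact that subsets of generic sets are generic.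
Since any two `n`-element subsets of `ℚ` are related by an automorphism, it is therefore consistent
to require of `g` that `g⁻¹ s` be generic for all finite `s` at once. This defines a filter on
`Aut(ℚ)` which is invariant under left translations, because the condition ranges over all `s`.
An automorphism stabilizing a finite set fixes it pointwise, so setwise stabilizers of finite sets
are a neighbourhood basis of `1`, and the filter is an ultrafilter up to translation by elements
close to `1`. Hence `g • x` converges along it for each `x` in a compact space, and by invariance
the limit is a fixed point.
-/

open Filter Topology
open scoped Finset Pointwise

section NearUltrafilter

variable {G : Type*} [Monoid G] [TopologicalSpace G]

/-- A filter `𝓕` on `G` is a *near ultrafilter* if `U * A ∈ 𝓕` for every neighbourhood `U` of `1`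
and every set `A` that meets all members of `𝓕`. -/
def IsNearUltrafilter (𝓕 : Filter G) : Prop :=
  ∀ U ∈ 𝓝 (1 : G), ∀ A : Set G, (∃ᶠ g in 𝓕, g ∈ A) → U * A ∈ 𝓕

variable {K : Type*} [TopologicalSpace K] [MulAction G K] [ContinuousSMul G K] {𝓕 : Filter G}

theorem IsNearUltrafilter.tendsto_smul (h𝓕 : IsNearUltrafilter 𝓕) {x z : K}
    (hz : MapClusterPt z 𝓕 (· • x)) : Tendsto (· • x) 𝓕 (𝓝 z) := by
  intro O hO
  have hsmul : Tendsto (fun p : G × K ↦ p.1 • p.2) (𝓝 1 ×ˢ 𝓝 z) (𝓝 z) :=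
    nhds_prod_eq (x := (1 : G)) (y := z) ▸ continuous_smul.tendsto' _ _ (one_smul G z)
  obtain ⟨U, hU, N, hN, hUN⟩ := mem_prod_iff.1 (hsmul hO)
  refine mem_map.2 (mem_of_superset (h𝓕 U hU {g | g • x ∈ N} (hz.frequently hN)) ?_)
  rintro _ ⟨u, hu, g, hg, rfl⟩
  rw [Set.mem_preimage, mul_smul]
  exact hUN (Set.mk_mem_prod hu hg)

theorem IsNearUltrafilter.exists_fixedPoint [CompactSpace K] [T2Space K] [Nonempty K] [NeBot 𝓕]
    (h𝓕 : IsNearUltrafilter 𝓕) (hinv : ∀ h : G, Tendsto (h * ·) 𝓕 𝓕) :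
    ∃ z : K, ∀ g : G, g • z = z := by
  obtain ⟨x⟩ := ‹Nonempty K›
  obtain ⟨z, hz⟩ := exists_clusterPt_of_compactSpace (map (· • x) 𝓕)
  have hlim : Tendsto (· • x) 𝓕 (𝓝 z) := h𝓕.tendsto_smul hz
  refine ⟨z, fun h ↦ tendsto_nhds_unique (hlim.const_smul h) ?_⟩
  simpa only [Function.comp_def, mul_smul] using hlim.comp (hinv h)

end NearUltrafilter

section FubiniPower

variable {X : Type*} [DecidableEq X]

/-- The `n`-th *Fubini power* of an ultrafilter `u`: the distribution of `{a₁, …, aₙ}` when `a₁` is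
chosen `u`-generically, and each later `aᵢ` likewise after its predecessors. It lives on finite sets
rather than on `n`-tuples; see `eventually_card_eq_fubiniPower` for the size of a generic set. -/
def fubiniPower (u : Ultrafilter X) : ℕ → Ultrafilter (Finset X)
  | 0 => pure ∅
  | n + 1 => u.bind fun a ↦ (fubiniPower u n).map (insert a)

theorem eventually_fubiniPower_zero {u : Ultrafilter X} {P : Finset X → Prop} :
    (∀ᶠ s in fubiniPower u 0, P s) ↔ P ∅ :=
  Iff.rfl

theorem eventually_fubiniPower_succ {u : Ultrafilter X} {n : ℕ} {P : Finset X → Prop} :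
    (∀ᶠ s in fubiniPower u (n + 1), P s) ↔ ∀ᶠ a in u, ∀ᶠ s in fubiniPower u n, P (insert a s) :=
  Iff.rfl

theorem eventually_notMem_fubiniPower {u : Ultrafilter X} (hu : (u : Filter X) ≤ cofinite) (a : X)
    (n : ℕ) : ∀ᶠ s : Finset X in fubiniPower u n, a ∉ s := by
  induction n with
  | zero => exact eventually_fubiniPower_zero.2 (Finset.notMem_empty a)
  | succ n ih =>
    refine eventually_fubiniPower_succ.2 ?_
    filter_upwards [hu (eventually_cofinite_ne a)] with b hb
    filter_upwards [ih] with s hs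
    simp [hb.symm, hs]

theorem eventually_card_eq_fubiniPower {u : Ultrafilter X} (hu : (u : Filter X) ≤ cofinite)
    (n : ℕ) : ∀ᶠ s : Finset X in fubiniPower u n, #s = n := by
  induction n with
  | zero => exact eventually_fubiniPower_zero.2 Finset.card_empty
  | succ n ih =>
    refine eventually_fubiniPower_succ.2 (.of_forall fun a ↦ ?_)
    filter_upwards [ih, eventually_notMem_fubiniPower hu a n] with s hcard ha
    rw [Finset.card_insert_of_notMem ha, hcard]

-- Ramsey's theorem in filter form: exactly one class of a finite colouring of the `n`-sets is
-- generic, hence a generic `t` is monochromatic.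
theorem eventually_forall_subset_fubiniPower {u : Ultrafilter X} {n : ℕ} {P : Finset X → Prop}
    (hP : ∀ᶠ s in fubiniPower u n, P s) (N : ℕ) :
    ∀ᶠ t : Finset X in fubiniPower u N, ∀ s ⊆ t, #s = n → P s := by
  induction N generalizing n P with
  | zero =>
    refine eventually_fubiniPower_zero.2 fun s hs hn ↦ ?_
    obtain rfl := Finset.subset_empty.1 hs
    subst hn
    exact eventually_fubiniPower_zero.1 hP
  | succ N ih =>
    refine eventually_fubiniPower_succ.2 ?_
    cases n with
    | zero =>
      refine .of_forall fun a ↦ .of_forall fun t s _ hs ↦ ?_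
      rw [Finset.card_eq_zero.1 hs]
      exact eventually_fubiniPower_zero.1 hP
    | succ n =>
      filter_upwards [eventually_fubiniPower_succ.1 hP] with a ha
      filter_upwards [ih hP, ih ha] with t hwithout hwith s hst hs
      by_cases has : a ∈ s
      · rw [← Finset.insert_erase has]
        exact hwith _ (Finset.subset_insert_iff.1 hst) (by simp [has, hs])
      · exact hwithout s ((Finset.subset_insert_iff_of_notMem has).1 hst) hs

end FubiniPower

section HighlyHomogeneous

/-- A group action on `X` is *highly homogeneous* if it is transitive on the `n`-element subsets of
`X` for every `n`. For the automorphisms of a chain this says that every order isomorphism between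
finite subsets extends to an automorphism. -/
def IsHighlyHomogeneous (G X : Type*) [Group G] [MulAction G X] [DecidableEq X] : Prop :=
  ∀ s t : Finset X, #s = #t → ∃ g : G, g • s = t

variable (G : Type*) {X : Type*} [Group G] [MulAction G X] [DecidableEq X]

/-- The filter on `G` of those `g` for which all the finite sets `g⁻¹ • s` are `u`-generic. The
inverse turns the invariance of this condition into invariance under left translations. -/
def genericFilter (u : Ultrafilter X) : Filter G :=
  ⨅ s : Finset X, comap (fun g : G ↦ g⁻¹ • s) (fubiniPower u #s)

variable {G}

theorem tendsto_inv_smul_genericFilter (u : Ultrafilter X) (s : Finset X) :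
    Tendsto (fun g : G ↦ g⁻¹ • s) (genericFilter G u) (fubiniPower u #s) :=
  tendsto_comap.mono_left (iInf_le _ s)

theorem tendsto_mul_left_genericFilter (u : Ultrafilter X) (h : G) :
    Tendsto (h * ·) (genericFilter G u) (genericFilter G u) := by
  refine tendsto_iInf.2 fun s ↦ tendsto_comap_iff.2 ?_
  simpa only [Function.comp_def, mul_inv_rev, mul_smul, Finset.card_smul_finset] using
    tendsto_inv_smul_genericFilter u (h⁻¹ • s)

theorem antitone_comap_inv_smul_fubiniPower (u : Ultrafilter X) :
    Antitone fun s : Finset X ↦ comap (fun g : G ↦ g⁻¹ • s) (fubiniPower u #s) := by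
  intro s t hst
  refine tendsto_iff_comap.1 fun P hP ↦ ?_
  have hsub := eventually_forall_subset_fubiniPower (P := (· ∈ P)) hP #t
  refine mem_map.2 (mem_of_superset (preimage_mem_comap hsub) fun g hg ↦ ?_)
  exact hg _ (Finset.smul_finset_subset_smul_finset hst) (Finset.card_smul_finset _ _)

theorem genericFilter_neBot (hG : IsHighlyHomogeneous G X) {u : Ultrafilter X}
    (hu : (u : Filter X) ≤ cofinite) : NeBot (genericFilter G u) := by
  refine iInf_neBot_of_directed (antitone_comap_inv_smul_fubiniPower u).directed_ge fun s ↦ ?_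
  refine comap_neBot fun P hP ↦ ?_
  obtain ⟨t, htP, hcard⟩ := (Eventually.and hP (eventually_card_eq_fubiniPower hu #s)).exists
  obtain ⟨g, rfl⟩ := hG s t hcard.symm
  exact ⟨g⁻¹, by rwa [inv_inv]⟩

theorem isNearUltrafilter_genericFilter [TopologicalSpace G]
    (hstab : ∀ U ∈ 𝓝 (1 : G), ∃ s : Finset X, (MulAction.stabilizer G s : Set G) ⊆ U)
    (u : Ultrafilter X) : IsNearUltrafilter (genericFilter G u) := by
  intro U hU A hA
  obtain ⟨s, hs⟩ := hstab U hU
  have hlim := tendsto_inv_smul_genericFilter (G := G) u s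
  have hgen : ∀ᶠ t in fubiniPower u #s, ∃ a ∈ A, a⁻¹ • s = t :=
    (hlim.frequently (hA.mono fun a ha ↦ ⟨a, ha, rfl⟩)).eventually
  filter_upwards [hlim hgen]
  rintro g ⟨a, ha, hag⟩
  refine ⟨g * a⁻¹, hs ?_, a, ha, inv_mul_cancel_right g a⟩
  rw [SetLike.mem_coe, MulAction.mem_stabilizer_iff, mul_smul, hag, smul_inv_smul]

theorem IsHighlyHomogeneous.exists_fixedPoint [TopologicalSpace G] [Infinite X]
    (hG : IsHighlyHomogeneous G X)
    (hstab : ∀ U ∈ 𝓝 (1 : G), ∃ s : Finset X, (MulAction.stabilizer G s : Set G) ⊆ U)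
    (K : Type*) [TopologicalSpace K] [CompactSpace K] [T2Space K] [Nonempty K]
    [MulAction G K] [ContinuousSMul G K] : ∃ x : K, ∀ g : G, g • x = x :=
  have : NeBot (genericFilter G (hyperfilter X)) := genericFilter_neBot hG hyperfilter_le_cofinite
  (isNearUltrafilter_genericFilter hstab (hyperfilter X)).exists_fixedPoint
    (tendsto_mul_left_genericFilter (hyperfilter X))

end HighlyHomogeneous

section Chain

variable {α : Type*} [LinearOrder α]

theorem orderIso_apply_eq_self_of_smul_finset_eq {g : α ≃o α} {s : Finset α} (hg : g • s = s) :
    ∀ a ∈ s, g a = a := by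
  have hmap : s.map g.toEquiv.toEmbedding = s := by
    rw [Finset.map_eq_image]
    exact hg
  have hsort : s.sort.map g = s.sort.map id :=
    calc
      s.sort.map g = (s.map g.toEquiv.toEmbedding).sort :=
        (g.strictMono.strictMonoOn s).map_finsetSort (f := g.toEquiv.toEmbedding)
      _ = s.sort.map id := by rw [hmap, List.map_id]
  exact fun a ha ↦ List.map_inj_left.1 hsort a ((Finset.mem_sort _).2 ha)

/-- The topology of pointwise convergence on the automorphisms of `α`, where `α` is discrete. -/
abbrev pointwiseTopology (α : Type*) [LE α] : TopologicalSpace (α ≃o α) :=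
  .induced (fun f ↦ (f : α → α)) (@Pi.topologicalSpace α (fun _ ↦ α) fun _ ↦ ⊥)

theorem exists_stabilizer_subset_of_mem_nhds_one {U : Set (α ≃o α)}
    (hU : U ∈ @nhds _ (pointwiseTopology α) 1) :
    ∃ s : Finset α, (MulAction.stabilizer (α ≃o α) s : Set (α ≃o α)) ⊆ U := by
  let : TopologicalSpace α := ⊥
  rw [nhds_induced, nhds_pi] at hU
  obtain ⟨V, hV, hVU⟩ := mem_comap.1 hU
  obtain ⟨I, hI, W, hW, hWV⟩ := Filter.mem_pi.1 hV
  refine ⟨hI.toFinset, fun g hg ↦ hVU (hWV fun a ha ↦ ?_)⟩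
  have hfix : g a = a := orderIso_apply_eq_self_of_smul_finset_eq hg a (hI.mem_toFinset.2 ha)
  change g a ∈ W a
  rw [hfix]
  exact mem_of_mem_nhds (hW a)

end Chain

section OrderedField

variable {𝕜 : Type*} [Field 𝕜] [LinearOrder 𝕜] [IsStrictOrderedRing 𝕜]

theorem exists_orderIso_apply_eq_of_lt {b p q : 𝕜} (hp : p < b) (hq : q < b) :
    ∃ g : 𝕜 ≃o 𝕜, g p = q ∧ ∀ x, b ≤ x → g x = x := by
  rw [← sub_neg] at hp hq
  let c := (q - b) / (p - b)
  have hc_pos : 0 < c := div_pos_of_neg_of_neg hq hp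
  let f : 𝕜 → 𝕜 := fun x ↦ if x < b then b + c * (x - b) else x
  have hf_lt {x : 𝕜} (hx : x < b) : f x = b + c * (x - b) := if_pos hx
  have hf_ge {x : 𝕜} (hx : b ≤ x) : f x = x := if_neg hx.not_gt
  have hf_mono : StrictMono f := by
    refine StrictMono.ite' (fun x y hxy ↦ ?_) strictMono_id (fun x y ↦ lt_trans) ?_
    · gcongr
    · intro x y hx hy _
      calc
        b + c * (x - b) < b := add_lt_of_neg_right b (mul_neg_of_pos_of_neg hc_pos (sub_neg.2 hx))
        _ ≤ y := not_lt.1 hy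
  have hf_surj : Function.Surjective f := by
    intro y
    obtain hy | hy := lt_or_ge y b
    · have hlt : b + (y - b) / c < b :=
        add_lt_of_neg_right b (div_neg_of_neg_of_pos (sub_neg.2 hy) hc_pos)
      exact ⟨b + (y - b) / c, by rw [hf_lt hlt]; field_simp; ring⟩
    · exact ⟨y, hf_ge hy⟩
  refine ⟨hf_mono.orderIsoOfSurjective f hf_surj, ?_, fun x ↦ hf_ge⟩
  calc
    f p = b + (q - b) / (p - b) * (p - b) := hf_lt (sub_neg.1 hp)
    _ = q := by rw [div_mul_cancel₀ _ hp.ne, add_sub_cancel]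

variable (𝕜) in
theorem isHighlyHomogeneous_orderIso : IsHighlyHomogeneous (𝕜 ≃o 𝕜) 𝕜 := by
  intro s
  induction s using Finset.induction_on_min with
  | empty => exact fun t ht ↦ ⟨1, by rw [one_smul, Finset.card_eq_zero.1 ht.symm]⟩
  | insert a s has ih =>
    intro t ht
    induction t using Finset.induction_on_min with
    | empty => simp at ht
    | insert b t hbt _ =>
      have ha : a ∉ s := fun h ↦ (has a h).false
      have hb : b ∉ t := fun h ↦ (hbt b h).false
      obtain ⟨g, rfl⟩ := ih t (by simpa [ha, hb] using ht)
      have hbelow : ∀ x ∈ ({g a, b} : Finset 𝕜), ∀ y ∈ g • s, x < y := by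
        intro x hx y hy
        obtain rfl | rfl : x = g a ∨ x = b := by simpa using hx
        · obtain ⟨z, hz, rfl⟩ := Finset.mem_smul_finset.1 hy
          exact g.strictMono (has z hz)
        · exact hbt y hy
      obtain ⟨m, hm, hms⟩ := Order.exists_between_finsets _ _ hbelow
      obtain ⟨h, hha, hfix⟩ :=
        exists_orderIso_apply_eq_of_lt (hm (g a) (by simp)) (hm b (by simp))
      have hs : h • g • s = g • s :=
        (Finset.image_congr fun y hy ↦ hfix y (hms y hy).le).trans Finset.image_id
      exact ⟨h * g, by rw [mul_smul, Finset.smul_finset_insert, Finset.smul_finset_insert, hs,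
        RelIso.smul_def, RelIso.smul_def, hha]⟩

end OrderedField

theorem pestov_aut_Q_extremelyAmenable_general {α : Type} [LinearOrder α]
    (hα : IsHighlyHomogeneous (α ≃o α) α) :
    letI : TopologicalSpace (α ≃o α) := pointwiseTopology α
    ExtremelyAmenable (α ≃o α) := by
  let := pointwiseTopology α
  intro K _ _ _ _ _ _
  obtain _ | _ := finite_or_infinite α
  · exact ⟨Classical.arbitrary K, fun g ↦ by rw [Subsingleton.elim g 1, one_smul]⟩
  · exact hα.exists_fixedPoint (fun _ ↦ exists_stabilizer_subset_of_mem_nhds_one) K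

/-- **Pestov's theorem**: the group of all increasing bijections of `ℚ`, with composition as
the group operation and the topology of pointwise convergence (`ℚ` discrete), is extremely
amenable. -/
theorem pestov_aut_Q_extremelyAmenable :
    letI : TopologicalSpace (ℚ ≃o ℚ) :=
      TopologicalSpace.induced (fun (f : ℚ ≃o ℚ) => (f : ℚ → ℚ))
        (@Pi.topologicalSpace ℚ (fun _ => ℚ) (fun _ => ⊥))
    ExtremelyAmenable (ℚ ≃o ℚ) := by
  exact pestov_aut_Q_extremelyAmenable_general (isHighlyHomogeneous_orderIso ℚ)
end

section
/- Let H be a separable infinite-dimensional complex Hilbert space. The unitary group U(H) of H, i.e., the group of all unitary operators on H with composition as the group operation, equipped with the strong operator topology (the topology of pointwise convergence: the topology induced by the inclusion U(H) → H^H, where H^H carries the product of the norm topologies), is extremely amenable: every continuous action of U(H) on a nonempty compact Hausdorff space has a fixed point. -/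
/-!
On the `n`-th power of a compact metric group, a function that changes by `O(1 / n)` in each
coordinate has variance `O(1 / n)` for Haar measure, so for large `n` some point is almost
invariant, for finitely many such functions at once, under finitely many left translations. The
bound on each coordinate may be relaxed to uniform continuity for the normalized `ℓ¹` metric.

These powers act on `H`: embed a finite-dimensional subspace `E` diagonally into the Hilbert sum
of `n` copies of `E`, and this sum into `H` so that the composite is the inclusion of `E`. Then
`U(E) ^ n` acts on `H` by unitaries, constant tuples restrict on `E` to the action of `U(E)`, and
`‖g ξ - ξ‖² = n⁻¹ ∑ k, ‖g k ξ - ξ‖²` for `ξ ∈ E`. This average makes orbit maps of a continuous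
action uniformly continuous for the normalized `ℓ¹` metric, uniformly in `n`, in the strong
operator topology. Finitely many unitaries of `H` agree on a given finite set with elements of
`U(E)` once `E` is large enough, and compactness turns almost fixed points into a fixed point.
-/

open Filter MeasureTheory ProbabilityTheory
open scoped NNReal Topology

/-! ### Variance on product spaces -/

theorem integrable_of_abs_sub_le {α : Type*} [MeasurableSpace α] {μ : Measure α}
    [IsFiniteMeasure μ] {f : α → ℝ} (hf : AEStronglyMeasurable f μ) {c : ℝ}
    (hfc : ∀ x y, |f x - f y| ≤ c) : Integrable f μ := by
  rcases isEmpty_or_nonempty α with _ | ⟨⟨x₀⟩⟩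
  · exact .of_isEmpty
  refine .of_bound hf (|f x₀| + c) (.of_forall fun x ↦ ?_)
  rw [Real.norm_eq_abs]
  linarith [hfc x x₀, abs_sub_abs_le_abs_sub (f x) (f x₀)]

theorem memLp_two_and_variance_prod_le {α β : Type*} [MeasurableSpace α] [MeasurableSpace β]
    (μ : Measure α) (ν : Measure β) [IsProbabilityMeasure μ] [IsProbabilityMeasure ν]
    {f : α × β → ℝ} (hf : StronglyMeasurable f) {c : ℝ}
    (hfc : ∀ x x' y, |f (x, y) - f (x', y)| ≤ c)
    (hF : MemLp (fun y ↦ ∫ x, f (x, y) ∂μ) 2 ν) :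
    MemLp f 2 (μ.prod ν) ∧
      Var[f; μ.prod ν] ≤ c ^ 2 + Var[fun y ↦ ∫ x, f (x, y) ∂μ; ν] := by
  set F : β → ℝ := fun y ↦ ∫ x, f (x, y) ∂μ
  let d : α × β → ℝ := fun p ↦ f p - F p.2
  have hslice (y : β) : Integrable (fun x ↦ f (x, y)) μ :=
    integrable_of_abs_sub_le (hf.comp_measurable measurable_prodMk_right).aestronglyMeasurable
      (hfc · · y)
  have hd_int (y : β) : ∫ x, d (x, y) ∂μ = 0 := by
    simp [d, F, integral_sub (hslice y) (integrable_const _)]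
  have hd_le (p : α × β) : |d p| ≤ c := by
    have h := norm_integral_le_of_norm_le_const (μ := μ) (f := fun x ↦ f p - f (x, p.2))
      (.of_forall fun x ↦ hfc p.1 x p.2)
    rw [integral_sub (integrable_const _) (hslice p.2)] at h
    simpa [d, F] using h
  have hF2 : MemLp (fun p : α × β ↦ F p.2) 2 (μ.prod ν) :=
    hF.comp_measurePreserving measurePreserving_snd
  have hd : MemLp d 2 (μ.prod ν) :=
    .of_bound (hf.aestronglyMeasurable.sub hF2.aestronglyMeasurable) c (.of_forall hd_le)
  -- On each fibre of the second projection, `d` has mean zero while `F p.2` is constant.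
  have hcov : cov[d, fun p ↦ F p.2; μ.prod ν] = 0 := by
    rw [covariance_eq_sub hd hF2, integral_prod_symm _ (hd.integrable_mul hF2),
      integral_prod_symm _ (hd.integrable one_le_two)]
    simp [integral_mul_const, hd_int]
  have hf_eq : f = d + fun p ↦ F p.2 := by ext p; simp [d]
  refine ⟨hf_eq ▸ hd.add hF2, ?_⟩
  calc Var[f; μ.prod ν] = Var[d; μ.prod ν] + Var[F; ν] := by
        rw [hf_eq, variance_add hd hF2, hcov,
          measurePreserving_snd.variance_fun_comp hF.aemeasurable]
        ring
    _ ≤ c ^ 2 + Var[F; ν] := by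
        gcongr
        simpa using variance_le_sq_of_bounded (a := -c) (b := c)
          (.of_forall fun p ↦ abs_le.1 (hd_le p)) hd.aemeasurable

theorem measurePreserving_finCons {n : ℕ} {α : Fin (n + 1) → Type*} [∀ i, MeasurableSpace (α i)]
    (μ : ∀ i, Measure (α i)) [∀ i, SigmaFinite (μ i)] :
    MeasurePreserving (fun p : α 0 × (∀ i : Fin n, α i.succ) ↦ (Fin.cons p.1 p.2 : ∀ i, α i))
      ((μ 0).prod (Measure.pi fun i ↦ μ i.succ)) (Measure.pi μ) := by
  convert! (measurePreserving_piFinSuccAbove μ 0).symm using 1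
  funext p
  exact (Fin.insertNth_zero p.1 p.2).symm

theorem memLp_two_and_variance_pi_le {n : ℕ} {α : Fin n → Type*} [∀ i, MeasurableSpace (α i)]
    (μ : ∀ i, Measure (α i)) [∀ i, IsProbabilityMeasure (μ i)] {f : (∀ i, α i) → ℝ}
    (hf : StronglyMeasurable f) {c : Fin n → ℝ}
    (hfc : ∀ x i a, |f x - f (Function.update x i a)| ≤ c i) :
    MemLp f 2 (Measure.pi μ) ∧ Var[f; Measure.pi μ] ≤ ∑ i, c i ^ 2 := by
  induction n with
  | zero =>
    have hconst : f = fun _ ↦ f finZeroElim := funext fun x ↦ congrArg f (Subsingleton.elim x _)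
    rw [hconst]
    exact ⟨memLp_const _, by simp [variance_eq_integral]⟩
  | succ n ih =>
    have hcons := measurePreserving_finCons μ
    let f' : α 0 × (∀ i : Fin n, α i.succ) → ℝ := fun p ↦ f (Fin.cons p.1 p.2)
    have hf' : StronglyMeasurable f' := hf.comp_measurable hcons.measurable
    let F : (∀ i : Fin n, α i.succ) → ℝ := fun y ↦ ∫ x, f' (x, y) ∂(μ 0)
    have hslice (y : ∀ i : Fin n, α i.succ) : Integrable (fun x ↦ f' (x, y)) (μ 0) :=
      integrable_of_abs_sub_le
        (hf'.comp_measurable measurable_prodMk_right).aestronglyMeasurable fun x x' ↦ by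
          simpa only [f', Fin.update_cons_zero] using hfc (Fin.cons x y) 0 x'
    have hFc (y : ∀ i : Fin n, α i.succ) (i a) :
        |F y - F (Function.update y i a)| ≤ c i.succ := by
      rw [← integral_sub (hslice _) (hslice _)]
      have := norm_integral_le_of_norm_le_const (μ := μ 0)
        (f := fun x ↦ f' (x, y) - f' (x, Function.update y i a)) (C := c i.succ)
        (.of_forall fun x ↦ by
          simpa only [f', Fin.cons_update, Real.norm_eq_abs] using hfc (Fin.cons x y) i.succ a)
      simpa using this
    obtain ⟨hF, hFvar⟩ := ih (fun i ↦ μ i.succ) hf'.integral_prod_left' hFc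
    obtain ⟨hf2, hfvar⟩ := memLp_two_and_variance_prod_le (μ 0) (Measure.pi fun i ↦ μ i.succ)
      hf' (c := c 0) (fun x x' y ↦ by
        simpa only [f', Fin.update_cons_zero] using hfc (Fin.cons x y) 0 x') hF
    refine ⟨?_, ?_⟩
    · rw [← hcons.map_eq,
        memLp_map_measure_iff hf.aestronglyMeasurable hcons.measurable.aemeasurable]
      exact hf2
    · rw [← hcons.variance_fun_comp hf.measurable.aemeasurable, Fin.sum_univ_succ]
      exact hfvar.trans (by gcongr)

/-! ### Almost invariant points on powers of a compact group -/

theorem integral_sq_comp_sub_le {Ω : Type*} [MeasurableSpace Ω] {μ : Measure Ω}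
    [IsProbabilityMeasure μ] {τ : Ω → Ω} (hτ : MeasurePreserving τ μ μ) {f : Ω → ℝ}
    (hf : MemLp f 2 μ) : ∫ ω, (f (τ ω) - f ω) ^ 2 ∂μ ≤ 4 * Var[f; μ] := by
  have hint : Integrable (fun ω ↦ (f ω - μ[f]) ^ 2) μ := (hf.sub (memLp_const _)).integrable_sq
  have hint_comp : Integrable (fun ω ↦ (f (τ ω) - μ[f]) ^ 2) μ :=
    hτ.integrable_comp_of_integrable hint
  have hcomp : ∫ ω, (f (τ ω) - μ[f]) ^ 2 ∂μ = ∫ ω, (f ω - μ[f]) ^ 2 ∂μ := by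
    rw [← integral_map (f := fun ω ↦ (f ω - μ[f]) ^ 2) hτ.aemeasurable] <;> rw [hτ.map_eq]
    exact hint.aestronglyMeasurable
  calc ∫ ω, (f (τ ω) - f ω) ^ 2 ∂μ
      ≤ ∫ ω, (2 * (f (τ ω) - μ[f]) ^ 2 + 2 * (f ω - μ[f]) ^ 2) ∂μ :=
        integral_mono ((hf.comp_measurePreserving hτ).sub hf).integrable_sq
          ((hint_comp.const_mul 2).add (hint.const_mul 2)) fun ω ↦ by
            dsimp
            linarith [sq_nonneg (f (τ ω) - μ[f] + (f ω - μ[f]))]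
    _ = 4 * Var[f; μ] := by
        rw [integral_add (hint_comp.const_mul 2) (hint.const_mul 2), integral_const_mul,
          integral_const_mul, hcomp, variance_eq_integral hf.aemeasurable]
        ring

theorem exists_forall_abs_comp_sub_le {Ω ι : Type*} [MeasurableSpace Ω] {μ : Measure Ω}
    [IsProbabilityMeasure μ] (T : Finset ι) {τ : ι → Ω → Ω}
    (hτ : ∀ i ∈ T, MeasurePreserving (τ i) μ μ) {f : ι → Ω → ℝ} (hf : ∀ i ∈ T, MemLp (f i) 2 μ)
    {ε : ℝ} (hε : 0 ≤ ε) (hvar : 4 * ∑ i ∈ T, Var[f i; μ] ≤ ε ^ 2) :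
    ∃ ω, ∀ i ∈ T, |f i (τ i ω) - f i ω| ≤ ε := by
  have hint (i) (hi : i ∈ T) : Integrable (fun ω ↦ (f i (τ i ω) - f i ω) ^ 2) μ :=
    (((hf i hi).comp_measurePreserving (hτ i hi)).sub (hf i hi)).integrable_sq
  obtain ⟨ω, hω⟩ := exists_le_integral (integrable_finsetSum T hint)
  refine ⟨ω, fun i hi ↦ abs_le_of_sq_le_sq ?_ hε⟩
  calc (f i (τ i ω) - f i ω) ^ 2
      ≤ ∑ j ∈ T, (f j (τ j ω) - f j ω) ^ 2 :=
        Finset.single_le_sum (f := fun j ↦ (f j (τ j ω) - f j ω) ^ 2)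
          (fun _ _ ↦ sq_nonneg _) hi
    _ ≤ ∑ j ∈ T, ∫ ω, (f j (τ j ω) - f j ω) ^ 2 ∂μ := by rwa [← integral_finsetSum T hint]
    _ ≤ ∑ j ∈ T, 4 * Var[f j; μ] :=
        Finset.sum_le_sum fun j hj ↦ integral_sq_comp_sub_le (hτ j hj) (hf j hj)
    _ ≤ ε ^ 2 := by rwa [← Finset.mul_sum]

theorem exists_lipschitzWith_abs_sub_le {α : Type*} [PseudoMetricSpace α] {ψ : α → ℝ}
    {B η : ℝ≥0} {ε : ℝ} (hη : 0 < η) (hε : 0 ≤ ε) (hB : ∀ x, |ψ x| ≤ B)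
    (hψ : ∀ x y, dist x y ≤ η → |ψ x - ψ y| ≤ ε) :
    ∃ φ : α → ℝ, LipschitzWith (2 * B / η) φ ∧ ∀ x, |φ x - ψ x| ≤ ε := by
  rcases isEmpty_or_nonempty α with _ | _
  · exact ⟨ψ, .of_dist_le_mul isEmptyElim, isEmptyElim⟩
  set L := 2 * B / η
  let φ : α → ℝ := fun x ↦ ⨅ y, (ψ y + L * dist x y)
  have hbdd (x) : BddBelow (Set.range fun y ↦ ψ y + L * dist x y) := by
    refine ⟨-B, Set.forall_mem_range.2 fun y ↦ ?_⟩
    have := mul_nonneg L.coe_nonneg (dist_nonneg (x := x) (y := y))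
    linarith [(abs_le.1 (hB y)).1]
  have hφ_lip : LipschitzWith L φ := .of_le_add_mul L fun x y ↦ by
    rw [← sub_le_iff_le_add]
    refine le_ciInf fun z ↦ ?_
    have := mul_le_mul_of_nonneg_left (dist_triangle x y z) L.coe_nonneg
    linarith [ciInf_le (hbdd x) z]
  have hφ_le (x) : φ x ≤ ψ x := by simpa using ciInf_le (hbdd x) x
  have hle_φ (x) : ψ x - ε ≤ φ x := by
    refine le_ciInf fun y ↦ ?_
    rcases le_or_gt (dist x y) η with hxy | hxy
    · linarith [(abs_le.1 (hψ x y hxy)).2, mul_nonneg L.coe_nonneg (dist_nonneg (x := x) (y := y))]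
    · -- Beyond distance `η` the penalty outweighs the oscillation of `ψ`, which is at most `2 * B`.
      have : 2 * B ≤ L * dist x y := by
        rw [← div_mul_cancel₀ (2 * B : ℝ) (NNReal.coe_pos.2 hη).ne']
        push_cast [L]
        gcongr
      linarith [(abs_le.1 (hB x)).2, (abs_le.1 (hB y)).1]
  exact ⟨φ, hφ_lip, fun x ↦ abs_le.2 ⟨by linarith [hle_φ x], by linarith [hφ_le x]⟩⟩

theorem dist_eq_sum_of_piLp_one {ι : Type*} [Fintype ι] {α : ι → Type*}
    [∀ i, PseudoMetricSpace (α i)] (x y : PiLp 1 α) : dist x y = ∑ i, dist (x i) (y i) := by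
  simp [PiLp.dist_eq_sum (p := 1) (by norm_num) x y]

theorem memLp_two_and_variance_pi_le_of_lipschitzWith {X : Type*} [PseudoMetricSpace X]
    [CompactSpace X] [MeasurableSpace X] [BorelSpace X] (μ : Measure X) [IsProbabilityMeasure μ]
    {n : ℕ} {L : ℝ≥0} {φ : PiLp 1 (fun _ : Fin n ↦ X) → ℝ} (hφ : LipschitzWith L φ) :
    MemLp (fun x ↦ φ (WithLp.toLp 1 x)) 2 (Measure.pi fun _ : Fin n ↦ μ) ∧
      Var[fun x ↦ φ (WithLp.toLp 1 x); Measure.pi fun _ : Fin n ↦ μ] ≤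
        n * (L * Metric.diam (Set.univ : Set X)) ^ 2 := by
  have hcont : Continuous fun x : Fin n → X ↦ φ (WithLp.toLp 1 x) :=
    hφ.continuous.comp (PiLp.continuous_toLp 1 _)
  convert! memLp_two_and_variance_pi_le (fun _ : Fin n ↦ μ) hcont.stronglyMeasurable
    (c := fun _ ↦ L * Metric.diam (Set.univ : Set X)) fun x i a ↦ ?_
  · simp
  rw [← Real.dist_eq]
  refine (hφ.dist_le_mul _ _).trans ?_
  gcongr
  rw [dist_eq_sum_of_piLp_one, Finset.sum_eq_single i (fun j _ hj ↦ by simp [hj]) (by simp)]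
  exact Metric.dist_le_diam_of_mem isCompact_univ.isBounded trivial trivial

theorem eventually_exists_forall_abs_translate_sub_le_of_lipschitzWith {X ι : Type*}
    [PseudoMetricSpace X] [CompactSpace X] [Group X] [IsTopologicalGroup X] (T : Finset ι)
    (C : ℝ≥0) {ε : ℝ} (hε : 0 < ε) :
    ∀ᶠ n : ℕ in atTop, ∀ (a : ι → X) (φ : ι → PiLp 1 (fun _ : Fin n ↦ X) → ℝ),
      (∀ i ∈ T, LipschitzWith (C / n) (φ i)) →
      ∃ g : Fin n → X,
        ∀ i ∈ T, |φ i (WithLp.toLp 1 fun k ↦ a i * g k) - φ i (WithLp.toLp 1 g)| ≤ ε := by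
  let _ : MeasurableSpace X := borel X
  have : BorelSpace X := ⟨rfl⟩
  let μ : Measure X := Measure.haarMeasure ⊤
  have : IsProbabilityMeasure μ := ⟨by
    simpa using Measure.haarMeasure_self (G := X) (K₀ := ⊤)⟩
  set D := Metric.diam (Set.univ : Set X)
  have hlim : Tendsto (fun n : ℕ ↦ 4 * (T.card * (n * (C / n * D) ^ 2))) atTop (𝓝 0) := by
    refine (tendsto_const_div_atTop_nhds_zero_nat (4 * T.card * C ^ 2 * D ^ 2)).congr fun n ↦ ?_
    rcases eq_or_ne n 0 with rfl | hn
    · simp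
    · field_simp
  filter_upwards [hlim.eventually_le_const (sq_pos_of_pos hε)] with n hn a φ hφ
  have hφ_var (i) (hi : i ∈ T) := memLp_two_and_variance_pi_le_of_lipschitzWith μ (hφ i hi)
  refine exists_forall_abs_comp_sub_le (μ := Measure.pi fun _ : Fin n ↦ μ) T
    (τ := fun i g k ↦ a i * g k) (f := fun i x ↦ φ i (WithLp.toLp 1 x))
    (fun i _ ↦ measurePreserving_mul_left _ fun _ ↦ a i) (fun i hi ↦ (hφ_var i hi).1) hε.le
    (le_trans ?_ hn)
  gcongr
  simpa using Finset.sum_le_card_nsmul T _ _ fun i hi ↦ (hφ_var i hi).2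

theorem eventually_exists_forall_abs_translate_sub_le {X ι : Type*} [PseudoMetricSpace X]
    [CompactSpace X] [Group X] [IsTopologicalGroup X] (T : Finset ι) {B η : ℝ≥0} {ε : ℝ}
    (hη : 0 < η) (hε : 0 < ε) :
    ∀ᶠ n : ℕ in atTop, ∀ (a : ι → X) (ψ : ι → (Fin n → X) → ℝ),
      (∀ i ∈ T, ∀ x, |ψ i x| ≤ B) →
      (∀ i ∈ T, ∀ x y, ∑ k, dist (x k) (y k) ≤ n * η → |ψ i x - ψ i y| ≤ ε) →
      ∃ g : Fin n → X, ∀ i ∈ T, |ψ i (fun k ↦ a i * g k) - ψ i g| ≤ 3 * ε := by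
  filter_upwards [eventually_gt_atTop 0,
    eventually_exists_forall_abs_translate_sub_le_of_lipschitzWith (X := X) T (2 * B / η) hε]
    with n hn htranslate a ψ hB hψ
  have hφ (i) (hi : i ∈ T) := exists_lipschitzWith_abs_sub_le (α := PiLp 1 (fun _ : Fin n ↦ X))
    (ψ := fun x ↦ ψ i x.ofLp) (η := η * n) (by positivity) hε.le (fun x ↦ hB i hi _)
    (fun x y hxy ↦ hψ i hi _ _ (by simpa [dist_eq_sum_of_piLp_one, mul_comm] using hxy))
  choose! φ hφ_lip hφψ using hφ
  obtain ⟨g, hg⟩ := htranslate a φ fun i hi ↦ by simpa only [div_div] using hφ_lip i hi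
  refine ⟨g, fun i hi ↦ ?_⟩
  have hag := hφψ i hi (WithLp.toLp 1 fun k ↦ a i * g k)
  rw [abs_sub_comm] at hag
  linarith [hg i hi, hφψ i hi (WithLp.toLp 1 g),
    abs_sub_le (ψ i fun k ↦ a i * g k) (φ i (WithLp.toLp 1 fun k ↦ a i * g k)) (ψ i g),
    abs_sub_le (φ i (WithLp.toLp 1 fun k ↦ a i * g k)) (φ i (WithLp.toLp 1 g)) (ψ i g)]

/-! ### Fixed points from approximation by powers -/

/-- The powers of the metric group `X` approximate `T ⊆ G` up to `U`: for some `η > 0` and every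
`n > 0` there is a homomorphism `X ^ n → G` whose values on constant tuples meet `U⁻¹ * g` for
each `g ∈ T`, and which sends tuples at normalized `ℓ¹` distance at most `η` to elements that
differ by a left factor in `U`. The scale `η` does not depend on `n`. -/
def IsPowerApproximation (X : Type*) [PseudoMetricSpace X] [Group X] {G : Type*} [Group G]
    (U T : Set G) : Prop :=
  ∃ η : ℝ≥0, 0 < η ∧ ∀ n : ℕ, 0 < n → ∃ ρ : (Fin n → X) →* G,
    (∀ g ∈ T, ∃ a : X, g * (ρ fun _ ↦ a)⁻¹ ∈ U) ∧
      ∀ x y : Fin n → X, ∑ k, dist (x k) (y k) ≤ n * η → ρ x * (ρ y)⁻¹ ∈ U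

theorem IsPowerApproximation.exists_forall_abs_smul_sub_le {X G K : Type*} [PseudoMetricSpace X]
    [CompactSpace X] [Group X] [IsTopologicalGroup X] [Group G] [MulAction G K]
    [TopologicalSpace K] [CompactSpace K] [Nonempty K] {U : Set G} {T : Finset G}
    (h : IsPowerApproximation X U (T : Set G)) (F : Finset C(K, ℝ)) {ε : ℝ} (hε : 0 < ε)
    (hF : ∀ f ∈ F, ∀ u ∈ U, ∀ y, |f (u • y) - f y| ≤ ε) :
    ∃ y, ∀ f ∈ F, ∀ g ∈ T, |f (g • y) - f y| ≤ 4 * ε := by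
  obtain ⟨η, hη, happrox⟩ := h
  obtain ⟨y₀⟩ := ‹Nonempty K›
  obtain ⟨n, hn, htranslate⟩ := ((eventually_gt_atTop 0).and
    (eventually_exists_forall_abs_translate_sub_le (X := X) (F ×ˢ T) (B := ∑ f ∈ F, ‖f‖₊)
      hη hε)).exists
  obtain ⟨ρ, hT, hρ⟩ := happrox n hn
  choose! a ha using hT
  obtain ⟨x, hx⟩ := htranslate (fun i ↦ a i.2) (fun i x ↦ i.1 (ρ x • y₀))
    (fun i hi x ↦ by
      have hf := Finset.single_le_sum (f := fun f : C(K, ℝ) ↦ ‖f‖₊) (fun _ _ ↦ zero_le)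
        (Finset.mem_product.1 hi).1
      exact (i.1.norm_coe_le_norm _).trans (NNReal.coe_le_coe.2 hf))
    (fun i hi x y hxy ↦ by
      simpa [smul_smul] using hF _ (Finset.mem_product.1 hi).1 _ (hρ x y hxy) (ρ y • y₀))
  refine ⟨ρ x • y₀, fun f hf g hg ↦ ?_⟩
  have happly := hx (f, g) (Finset.mk_mem_product hf hg)
  have hsplit : ρ (fun k ↦ a g * x k) = ρ (fun _ ↦ a g) * ρ x := map_mul ρ (fun _ ↦ a g) x
  have hg' := hF f hf _ (ha g hg) (ρ (fun k ↦ a g * x k) • y₀)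
  rw [hsplit, smul_smul, ← mul_assoc, inv_mul_cancel_right, mul_smul] at hg'
  rw [hsplit] at happly
  linarith [abs_sub_le (f (g • ρ x • y₀)) (f ((ρ (fun _ ↦ a g) * ρ x) • y₀)) (f (ρ x • y₀))]

theorem eventually_forall_abs_smul_sub_lt {G K : Type*} [Monoid G] [TopologicalSpace G]
    [TopologicalSpace K] [CompactSpace K] [MulAction G K] [ContinuousSMul G K] (f : C(K, ℝ))
    {ε : ℝ} (hε : 0 < ε) : ∀ᶠ u in 𝓝 (1 : G), ∀ y, |f (u • y) - f y| < ε := by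
  have hcont : Continuous fun p : G × K ↦ |f (p.1 • p.2) - f p.2| := by fun_prop
  simpa using isCompact_univ.eventually_forall_of_forall_eventually (x₀ := (1 : G))
    (P := fun u y ↦ |f (u • y) - f y| < ε) fun y _ ↦
      hcont.continuousAt.eventually_lt continuousAt_const (by simpa using hε)

theorem exists_forall_smul_eq_of_forall_finset {G K : Type*} [TopologicalSpace K] [CompactSpace K]
    [T2Space K] [SMul G K] [ContinuousConstSMul G K]
    (h : ∀ (F : Finset C(K, ℝ)) (T : Finset G), ∃ y, ∀ f ∈ F, ∀ g ∈ T, |f (g • y) - f y| ≤ 1) :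
    ∃ y : K, ∀ g : G, g • y = y := by
  classical
  obtain ⟨y, hy⟩ := CompactSpace.iInter_nonempty
    (t := fun i : C(K, ℝ) × G ↦ {y | |i.1 (i.2 • y) - i.1 y| ≤ 1})
    (fun i ↦ isClosed_le (by fun_prop) continuous_const) fun s ↦ by
      obtain ⟨y, hy⟩ := h (s.image Prod.fst) (s.image Prod.snd)
      exact ⟨y, Set.mem_iInter₂.2 fun i hi ↦
        hy _ (Finset.mem_image_of_mem _ hi) _ (Finset.mem_image_of_mem _ hi)⟩
  refine ⟨y, fun g ↦ by_contra fun hne ↦ ?_⟩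
  obtain ⟨f, hf₀, hf₁, -⟩ := exists_continuous_zero_one_of_isClosed
    (isClosed_singleton (x := y)) (isClosed_singleton (x := g • y))
    (Set.disjoint_singleton.2 (Ne.symm hne))
  have := Set.mem_iInter.1 hy ((2 : ℝ) • f, g)
  norm_num [hf₀ rfl, hf₁ rfl] at this

/-! ### Unitary groups -/

section Hilbert

variable {𝕜 : Type*} [RCLike 𝕜] {H : Type*} [NormedAddCommGroup H] [InnerProductSpace 𝕜 H]
  {V : Type*} [NormedAddCommGroup V] [InnerProductSpace 𝕜 V]

theorem nonempty_linearIsometry_of_not_finiteDimensional [FiniteDimensional 𝕜 V]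
    (hH : ¬ FiniteDimensional 𝕜 H) : Nonempty (V →ₗᵢ[𝕜] H) := by
  have hrank : (Module.finrank 𝕜 V : Cardinal) ≤ Module.rank 𝕜 H :=
    Cardinal.natCast_lt_aleph0.le.trans (not_lt.1 fun h ↦ hH (Module.rank_lt_aleph0_iff.1 h))
  obtain ⟨w, hw⟩ := exists_linearIndependent_of_le_rank hrank
  let b := stdOrthonormalBasis 𝕜 V
  let f : V →ₗ[𝕜] H := b.toBasis.constr 𝕜 (InnerProductSpace.gramSchmidtNormed 𝕜 w)
  have hf : f ∘ b.toBasis = InnerProductSpace.gramSchmidtNormed 𝕜 w :=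
    funext (b.toBasis.constr_basis 𝕜 _)
  exact ⟨f.isometryOfOrthonormal (v := b.toBasis) (by simp)
    (hf ▸ InnerProductSpace.gramSchmidtNormed_orthonormal hw)⟩

/-- The linear isometry `f` regarded as a map into a subspace containing its range. -/
def isometryCodRestrict (f : V →ₗᵢ[𝕜] H) (W : Submodule 𝕜 H) (h : ∀ v, f v ∈ W) :
    V →ₗᵢ[𝕜] W where
  toLinearMap := f.toLinearMap.codRestrict W h
  norm_map' := f.norm_map

theorem exists_linearIsometryEquiv_apply_eq [FiniteDimensional 𝕜 H] (f g : V →ₗᵢ[𝕜] H) :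
    ∃ U : H ≃ₗᵢ[𝕜] H, ∀ v, U (f v) = g v := by
  let L := g.comp f.equivRange.symm.toLinearIsometry
  refine ⟨L.extend.toLinearIsometryEquiv rfl, fun v ↦ ?_⟩
  have hL : f.equivRange.symm (f.equivRange v) = v := f.equivRange.symm_apply_apply v
  exact (L.extend_apply (f.equivRange v)).trans (congrArg g hL)

theorem exists_linearIsometry_apply_eq_coe [FiniteDimensional 𝕜 V]
    (hH : ¬ FiniteDimensional 𝕜 H) (E : Submodule 𝕜 H) [FiniteDimensional 𝕜 E]
    (f : E →ₗᵢ[𝕜] V) : ∃ T : V →ₗᵢ[𝕜] H, ∀ ξ, T (f ξ) = ξ := by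
  obtain ⟨J⟩ := nonempty_linearIsometry_of_not_finiteDimensional (V := V) hH
  let W : Submodule 𝕜 H := E ⊔ LinearMap.range J.toLinearMap
  let JW : V →ₗᵢ[𝕜] W := isometryCodRestrict J W fun v ↦
    Submodule.mem_sup_right (LinearMap.mem_range_self _ v)
  obtain ⟨U, hU⟩ := exists_linearIsometryEquiv_apply_eq (JW.comp f)
    (isometryCodRestrict E.subtypeₗᵢ W fun ξ ↦ Submodule.mem_sup_left ξ.2)
  exact ⟨W.subtypeₗᵢ.comp (U.toLinearIsometry.comp JW), fun ξ ↦ congrArg Subtype.val (hU ξ)⟩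

variable [CompleteSpace H]

theorem exists_finiteDimensional_forall_exists_unitary_apply_eq {ι : Type*} (T : Finset ι)
    (u : ι → unitary (H →L[𝕜] H)) (F : Submodule 𝕜 H) [FiniteDimensional 𝕜 F] :
    ∃ (E : Submodule 𝕜 H) (_ : FiniteDimensional 𝕜 E), F ≤ E ∧ ∀ i ∈ T,
      ∃ v : unitary (E →L[𝕜] E), ∀ ξ : E, (ξ : H) ∈ F →
        ((v : E →L[𝕜] E) ξ : H) = (u i : H →L[𝕜] H) ξ := by
  let E := F ⊔ T.sup fun i ↦ F.map (u i : H →L[𝕜] H).toLinearMap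
  have : FiniteDimensional 𝕜 E := inferInstance
  have hFE : F ≤ E := le_sup_left
  refine ⟨E, this, hFE, fun i hi ↦ ?_⟩
  have hE (ξ : F) : (u i : H →L[𝕜] H) ξ ∈ E :=
    (Finset.le_sup (f := fun i ↦ F.map (u i : H →L[𝕜] H).toLinearMap) hi).trans le_sup_right
      (Submodule.mem_map_of_mem ξ.2)
  obtain ⟨U, hU⟩ := exists_linearIsometryEquiv_apply_eq
    (isometryCodRestrict F.subtypeₗᵢ E fun ξ ↦ hFE ξ.2)
    (isometryCodRestrict ((Unitary.linearIsometryEquiv (u i)).toLinearIsometry.comp F.subtypeₗᵢ)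
      E hE)
  exact ⟨Unitary.linearIsometryEquiv.symm U, fun ξ hξ ↦ congrArg Subtype.val (hU ⟨ξ, hξ⟩)⟩

variable [CompleteSpace V]

/-- For an isometric embedding `T` of `V` into `H`, `ampliation T A` is the operator on `H` that
acts as `A` on the copy of `V` inside `H` and as the identity on its orthogonal complement. -/
noncomputable def ampliation (T : V →ₗᵢ[𝕜] H) : (V →L[𝕜] V) →⋆* (H →L[𝕜] H) where
  toFun A := 1 + T.toContinuousLinearMap ∘L (A - 1) ∘L
    ContinuousLinearMap.adjoint T.toContinuousLinearMap
  map_one' := by simp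
  map_mul' A B := by
    have hT (v) : ContinuousLinearMap.adjoint T.toContinuousLinearMap (T v) = v :=
      DFunLike.congr_fun (LinearIsometry.adjoint_comp_self T) v
    ext x
    simp only [ContinuousLinearMap.sub_comp, ContinuousLinearMap.comp_sub, add_apply,
      one_apply_eq_self, sub_apply, ContinuousLinearMap.comp_apply, mul_apply_eq_comp,
      LinearIsometry.coe_toContinuousLinearMap, map_add, map_sub, hT, add_sub_cancel]
    abel
  map_star' A := by
    have hone : ContinuousLinearMap.adjoint (1 : V →L[𝕜] V) = 1 := star_one _
    simp [ContinuousLinearMap.star_eq_adjoint, ContinuousLinearMap.adjoint_comp,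
      ContinuousLinearMap.comp_assoc, hone]

theorem ampliation_apply_apply (T : V →ₗᵢ[𝕜] H) (A : V →L[𝕜] V) (v : V) :
    ampliation T A (T v) = T (A v) := by
  have hT : ContinuousLinearMap.adjoint T.toContinuousLinearMap (T v) = v :=
    DFunLike.congr_fun (LinearIsometry.adjoint_comp_self T) v
  simp [ampliation, hT]

variable (𝕜 V) in
/-- The isometric embedding `v ↦ n⁻¹ᐟ² (v, …, v)` of `V` into the Hilbert sum of `n` copies of
itself. -/
noncomputable def diagonalIsometry (n : ℕ) [NeZero n] : V →ₗᵢ[𝕜] PiLp 2 fun _ : Fin n ↦ V where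
  toFun v := WithLp.toLp 2 fun _ ↦ ((√n)⁻¹ : 𝕜) • v
  map_add' v w := by ext; simp
  map_smul' c v := by ext; simp [smul_comm c]
  norm_map' v := by
    have hn : (n : ℝ) ≠ 0 := Nat.cast_ne_zero.2 (NeZero.ne n)
    rw [← sq_eq_sq₀ (norm_nonneg _) (norm_nonneg _), PiLp.norm_sq_eq_of_L2]
    simp [norm_smul, mul_pow, hn]

variable (𝕜 V) in
/-- Coordinatewise action of `n`-tuples of unitaries of `V` on the Hilbert sum of `n` copies of
`V`. -/
noncomputable def unitaryPi (n : ℕ) : (Fin n → unitary (V →L[𝕜] V)) →*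
    unitary (PiLp 2 (fun _ : Fin n ↦ V) →L[𝕜] PiLp 2 fun _ : Fin n ↦ V) where
  toFun g := Unitary.linearIsometryEquiv.symm
    (LinearIsometryEquiv.piLpCongrRight 2 fun k ↦ Unitary.linearIsometryEquiv (g k))
  map_one' := by ext; simp
  map_mul' g h := by ext; simp

theorem exists_monoidHom_unitary (hH : ¬ FiniteDimensional 𝕜 H) (E : Submodule 𝕜 H)
    [FiniteDimensional 𝕜 E] {n : ℕ} (hn : 0 < n) :
    ∃ ρ : (Fin n → unitary (E →L[𝕜] E)) →* unitary (H →L[𝕜] H),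
      (∀ v (ξ : E), (ρ (fun _ ↦ v) : H →L[𝕜] H) ξ = (v : E →L[𝕜] E) ξ) ∧
        ∀ g (ξ : E), ‖(ρ g : H →L[𝕜] H) ξ - ξ‖ ^ 2 =
          (∑ k, ‖(g k : E →L[𝕜] E) ξ - ξ‖ ^ 2) / n := by
  have : NeZero n := ⟨hn.ne'⟩
  obtain ⟨T, hT⟩ := exists_linearIsometry_apply_eq_coe hH E (diagonalIsometry 𝕜 E n)
  let ρ := (Unitary.map (ampliation T)).toMonoidHom.comp (unitaryPi 𝕜 E n)
  have hρ (g) (ξ : E) : (ρ g : H →L[𝕜] H) ξ =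
      T (WithLp.toLp 2 fun k ↦ ((√n)⁻¹ : 𝕜) • (g k : E →L[𝕜] E) ξ) := by
    rw [← hT ξ]
    refine (ampliation_apply_apply T _ _).trans (congrArg T ?_)
    ext k
    exact congrArg Subtype.val (map_smul (g k : E →L[𝕜] E) _ ξ)
  refine ⟨ρ, fun v ξ ↦ (hρ _ ξ).trans (hT _), fun g ξ ↦ ?_⟩
  have hsub : (ρ g : H →L[𝕜] H) ξ - ξ =
      T (WithLp.toLp 2 fun k ↦ ((√n)⁻¹ : 𝕜) • ((g k : E →L[𝕜] E) ξ - ξ)) := by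
    calc (ρ g : H →L[𝕜] H) ξ - ξ
        = T ((WithLp.toLp 2 fun k ↦ ((√n)⁻¹ : 𝕜) • (g k : E →L[𝕜] E) ξ) -
            diagonalIsometry 𝕜 E n ξ) := by rw [map_sub, hρ, hT]
      _ = _ := by congr 1; ext k; simp [diagonalIsometry, smul_sub]
  rw [hsub, T.norm_map, PiLp.norm_sq_eq_of_L2]
  simp [norm_smul, mul_pow, ← Finset.mul_sum, div_eq_inv_mul]

theorem compactSpace_unitary_of_finiteDimensional (𝕜 V : Type*) [RCLike 𝕜] [NormedAddCommGroup V]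
    [InnerProductSpace 𝕜 V] [FiniteDimensional 𝕜 V] [CompleteSpace V] :
    CompactSpace (unitary (V →L[𝕜] V)) := by
  have : ProperSpace (V →L[𝕜] V) := FiniteDimensional.proper 𝕜 _
  have hbounded : (unitary (V →L[𝕜] V) : Set (V →L[𝕜] V)) ⊆ Metric.closedBall 0 1 := fun u hu ↦
    mem_closedBall_zero_iff.2 <| ContinuousLinearMap.opNorm_le_bound _ zero_le_one fun x ↦ by
      simpa using (Unitary.norm_map ⟨u, hu⟩ x).le
  exact isCompact_iff_compactSpace.1 (Metric.isCompact_of_isClosed_isBounded isClosed_unitary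
    (Metric.isBounded_closedBall.subset hbounded))

variable (𝕜 H) in
/-- The strong operator topology on the unitary group of `H`. -/
abbrev strongOperatorTopology : TopologicalSpace (unitary (H →L[𝕜] H)) :=
  .induced (fun u x ↦ (u : H →L[𝕜] H) x) Pi.topologicalSpace

variable (𝕜) in
/-- The unitaries that move each `ξ ∈ S` by less than `δ`: a basic neighbourhood of the identity in
the strong operator topology when `S` is finite and `0 < δ`. -/
def almostFixing (S : Set H) (δ : ℝ) : Set (unitary (H →L[𝕜] H)) :=
  {u | ∀ ξ ∈ S, ‖(u : H →L[𝕜] H) ξ - ξ‖ < δ}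

theorem exists_almostFixing_subset_of_mem_nhds_one {W : Set (unitary (H →L[𝕜] H))}
    (hW : W ∈ @nhds _ (strongOperatorTopology 𝕜 H) 1) :
    ∃ (S : Finset H) (δ : ℝ), 0 < δ ∧ almostFixing 𝕜 (S : Set H) δ ⊆ W := by
  rw [nhds_induced, nhds_pi] at hW
  obtain ⟨V, hV, hVW⟩ := hW
  obtain ⟨S, hS, t, ht, htV⟩ := Filter.mem_pi.1 hV
  have hball : ∀ᶠ δ in 𝓝[>] (0 : ℝ), ∀ ξ ∈ S, Metric.ball ξ δ ⊆ t ξ :=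
    (Filter.eventually_all_finite hS).2 fun ξ _ ↦
      (eventually_ball_subset (ht ξ)).filter_mono nhdsWithin_le_nhds
  obtain ⟨δ, hδt, hδ⟩ := (hball.and self_mem_nhdsWithin).exists
  refine ⟨hS.toFinset, δ, hδ, fun u hu ↦ hVW (htV fun ξ hξ ↦ hδt ξ hξ ?_)⟩
  exact mem_ball_iff_norm.2 (hu ξ (hS.mem_toFinset.2 hξ))

theorem norm_mul_inv_apply_sub_sq_le (u v : unitary (H →L[𝕜] H)) (ξ : H) :
    ‖((u * v⁻¹ : unitary (H →L[𝕜] H)) : H →L[𝕜] H) ξ - ξ‖ ^ 2 ≤ 2 * dist u v * ‖ξ‖ ^ 2 := by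
  set d := ‖((u * v⁻¹ : unitary (H →L[𝕜] H)) : H →L[𝕜] H) ξ - ξ‖
  have hdist : d ≤ dist u v * ‖ξ‖ := by
    have hop : ((u * v⁻¹ : unitary (H →L[𝕜] H)) : H →L[𝕜] H) - 1 =
        ((u : H →L[𝕜] H) - v) * ((v⁻¹ : unitary (H →L[𝕜] H)) : H →L[𝕜] H) := by
      rw [sub_mul, ← Submonoid.coe_mul, ← Submonoid.coe_mul, mul_inv_cancel, Submonoid.coe_one]
    rw [Subtype.dist_eq, dist_eq_norm, ← CStarRing.norm_mul_coe_unitary _ v⁻¹, ← hop]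
    exact ContinuousLinearMap.le_opNorm
      (((u * v⁻¹ : unitary (H →L[𝕜] H)) : H →L[𝕜] H) - 1) ξ
  have hbound : d ≤ 2 * ‖ξ‖ := by
    have := norm_sub_le (((u * v⁻¹ : unitary (H →L[𝕜] H)) : H →L[𝕜] H) ξ) ξ
    rw [Unitary.norm_map] at this
    linarith
  -- Using the trivial bound for one factor keeps the estimate linear in `dist u v`, as the `ℓ¹`
  -- condition in `IsPowerApproximation` requires.
  calc d ^ 2 = d * d := sq d
    _ ≤ (dist u v * ‖ξ‖) * (2 * ‖ξ‖) := by gcongr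
    _ = 2 * dist u v * ‖ξ‖ ^ 2 := by ring

theorem norm_map_mul_inv_apply_sub_sq_le {E : Submodule 𝕜 H} [CompleteSpace E] {n : ℕ}
    (ρ : (Fin n → unitary (E →L[𝕜] E)) →* unitary (H →L[𝕜] H))
    (hρ : ∀ g (ξ : E), ‖(ρ g : H →L[𝕜] H) ξ - ξ‖ ^ 2 =
      (∑ k, ‖(g k : E →L[𝕜] E) ξ - ξ‖ ^ 2) / n) (x y : Fin n → unitary (E →L[𝕜] E)) (ξ : E) :
    ‖((ρ x * (ρ y)⁻¹ : unitary (H →L[𝕜] H)) : H →L[𝕜] H) ξ - ξ‖ ^ 2 ≤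
      2 * ‖ξ‖ ^ 2 * (∑ k, dist (x k) (y k)) / n := by
  calc ‖((ρ x * (ρ y)⁻¹ : unitary (H →L[𝕜] H)) : H →L[𝕜] H) ξ - ξ‖ ^ 2
      = (∑ k, ‖((x k * (y k)⁻¹ : unitary (E →L[𝕜] E)) : E →L[𝕜] E) ξ - ξ‖ ^ 2) / n := by
        rw [← ρ.map_inv, ← ρ.map_mul]; exact hρ (x * y⁻¹) ξ
    _ ≤ (∑ k, 2 * dist (x k) (y k) * ‖ξ‖ ^ 2) / n := by
        gcongr with k; exact norm_mul_inv_apply_sub_sq_le (x k) (y k) ξ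
    _ = 2 * ‖ξ‖ ^ 2 * (∑ k, dist (x k) (y k)) / n := by
        rw [Finset.mul_sum]; congr! 2; ring

theorem exists_isPowerApproximation_almostFixing (hH : ¬ FiniteDimensional 𝕜 H) (S : Finset H)
    {δ : ℝ} (hδ : 0 < δ) (T : Finset (unitary (H →L[𝕜] H))) :
    ∃ (E : Submodule 𝕜 H) (_ : FiniteDimensional 𝕜 E),
      IsPowerApproximation (unitary (E →L[𝕜] E)) (almostFixing 𝕜 (S : Set H) δ)
        (T : Set (unitary (H →L[𝕜] H))) := by
  obtain ⟨E, hE, hSE, hT⟩ := exists_finiteDimensional_forall_exists_unitary_apply_eq T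
    (fun g ↦ g⁻¹) (Submodule.span 𝕜 (S : Set H))
  have hS {ξ} (hξ : ξ ∈ S) : ξ ∈ Submodule.span 𝕜 (S : Set H) := Submodule.subset_span hξ
  let M : ℝ := 1 + ∑ ξ ∈ S, ‖ξ‖ ^ 2
  have hM : 0 < M := by positivity
  have hSM {ξ} (hξ : ξ ∈ S) : ‖ξ‖ ^ 2 < M := (Finset.single_le_sum
    (f := fun ξ : H ↦ ‖ξ‖ ^ 2) (fun _ _ ↦ sq_nonneg _) hξ).trans_lt (lt_one_add _)
  refine ⟨E, hE, ⟨δ ^ 2 / (2 * M), by positivity⟩,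
    NNReal.coe_pos.1 (div_pos (by positivity) (by positivity)), fun n hn ↦ ?_⟩
  obtain ⟨ρ, hconst, hnorm⟩ := exists_monoidHom_unitary hH E hn
  refine ⟨ρ, fun g hg ↦ ?_, fun x y hxy ξ hξ ↦ ?_⟩
  · obtain ⟨v, hv⟩ := hT g hg
    refine ⟨v⁻¹, fun ξ hξ ↦ ?_⟩
    have hinv : (ρ fun _ ↦ v⁻¹)⁻¹ = ρ fun _ ↦ v :=
      (ρ.map_inv _).symm.trans (congrArg ρ (funext fun _ ↦ inv_inv v))
    have hfix : ((g * (ρ fun _ ↦ v⁻¹)⁻¹ : unitary (H →L[𝕜] H)) : H →L[𝕜] H) ξ = ξ := by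
      calc ((g * (ρ fun _ ↦ v⁻¹)⁻¹ : unitary (H →L[𝕜] H)) : H →L[𝕜] H) ξ
          = (g : H →L[𝕜] H) (((g⁻¹ : unitary (H →L[𝕜] H)) : H →L[𝕜] H) ξ) := by
            rw [hinv, ← hv ⟨ξ, hSE (hS hξ)⟩ (hS hξ), ← hconst]; rfl
        _ = ((g * g⁻¹ : unitary (H →L[𝕜] H)) : H →L[𝕜] H) ξ := rfl
        _ = ξ := by rw [mul_inv_cancel]; rfl
    rwa [hfix, sub_self, norm_zero]
  · refine lt_of_pow_lt_pow_left₀ 2 hδ.le ?_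
    calc ‖((ρ x * (ρ y)⁻¹ : unitary (H →L[𝕜] H)) : H →L[𝕜] H) ξ - ξ‖ ^ 2
        ≤ 2 * ‖ξ‖ ^ 2 * (∑ k, dist (x k) (y k)) / n :=
          norm_map_mul_inv_apply_sub_sq_le ρ hnorm x y ⟨ξ, hSE (hS hξ)⟩
      _ ≤ 2 * ‖ξ‖ ^ 2 * (n * (δ ^ 2 / (2 * M))) / n := by gcongr; exact hxy
      _ = δ ^ 2 * (‖ξ‖ ^ 2 / M) := by field_simp
      _ < δ ^ 2 := mul_lt_of_lt_one_right (by positivity) ((div_lt_one hM).2 (hSM hξ))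

set_option maxSynthPendingDepth 3 in
theorem gromov_milman_unitary_extremelyAmenable_general (hH : ¬ FiniteDimensional 𝕜 H)
    (K : Type*) [TopologicalSpace K] [CompactSpace K] [T2Space K] [Nonempty K]
    [MulAction (unitary (H →L[𝕜] H)) K]
    (hK : letI := strongOperatorTopology 𝕜 H; ContinuousSMul (unitary (H →L[𝕜] H)) K) :
    ∃ x : K, ∀ u : unitary (H →L[𝕜] H), u • x = x := by
  let := strongOperatorTopology 𝕜 H
  refine exists_forall_smul_eq_of_forall_finset fun F T ↦ ?_
  have hF : ∀ᶠ u in 𝓝 (1 : unitary (H →L[𝕜] H)), ∀ f ∈ F, ∀ y, |f (u • y) - f y| < 1 / 4 :=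
    (Filter.eventually_all_finset F).2 fun f _ ↦ eventually_forall_abs_smul_sub_lt f (by norm_num)
  obtain ⟨S, δ, hδ, hS⟩ := exists_almostFixing_subset_of_mem_nhds_one hF
  obtain ⟨E, hE, happrox⟩ := exists_isPowerApproximation_almostFixing hH S hδ T
  have := compactSpace_unitary_of_finiteDimensional 𝕜 E
  obtain ⟨y, hy⟩ := happrox.exists_forall_abs_smul_sub_le F (ε := 1 / 4) (by norm_num)
    fun f hf u hu y ↦ (hS hu f hf y).le
  exact ⟨y, fun f hf g hg ↦ by simpa using hy f hf g hg⟩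

end Hilbert

/-- **Gromov–Milman**: the unitary group of a separable infinite-dimensional complex Hilbert
space, equipped with the strong operator topology (the topology of pointwise convergence,
induced by the inclusion into `H → H` with the product of norm topologies), is extremely
amenable. -/
theorem gromov_milman_unitary_extremelyAmenable
    (H : Type) [NormedAddCommGroup H] [InnerProductSpace ℂ H] [CompleteSpace H]
    [TopologicalSpace.SeparableSpace H] (hinf : ¬ FiniteDimensional ℂ H) :
    letI : TopologicalSpace (unitary (H →L[ℂ] H)) :=
      TopologicalSpace.induced
        (fun (u : unitary (H →L[ℂ] H)) => fun (x : H) => (u : H →L[ℂ] H) x)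
        Pi.topologicalSpace
    ExtremelyAmenable (unitary (H →L[ℂ] H)) := by
  intro K _ _ _ _ _ hK
  exact gromov_milman_unitary_extremelyAmenable_general hinf K hK
end
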